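/- Let Θ ⊆ ℝ^d be convex with sup-norm diameter at most D, let f₁, …, f_n : ℝ^d → ℝ be convex and differentiable with ∇f_i(θ) ≠ 0 and ‖∇f_i(θ)‖_∞ ≤ G for all i and all θ ∈ Θ, and let θ₁ ∈ Θ. Run adaptive-probabilities SGD with step sizes α_t = 1/√t and optimal probabilities: given the history (i₁,…,i_{t−1}) and the resulting θ_t ∈ Θ, set p̂_t(i) = ‖∇f_i(θ_t)‖₂ / Σ_j ‖∇f_j(θ_t)‖₂, ŵ_i = 1/(n p̂_t(i)), and let θ_{t+1}(i₁,…,i_t) ∈ Θ be a Euclidean projection of θ_t − α_t ŵ_{i_t} ∇f_{i_t}(θ_t) onto Θ. With trajectory probabilities P(i₁,…,i_t) = Π_{τ≤t} p̂_τ(i_τ) and E the corresponding expectation, for every θ* ∈ Θ and f = (1/n) Σ_i f_i: Σ_{t=1}^T E[ f(θ_t) − f(θ*) ] ≤ d G² (√T − 1/2) − Σ_{t=1}^T (1/(2√t)) E[ Var_n( ‖∇f_i(θ_t)‖₂ ) ] + (d D²/2) √T. -/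

import Mathlib

/-- Probability of the partial trajectory `s = (i₁, …, i_t)` under the history-dependent
sampling distributions `p`: `P(i₁,…,i_t) = Π_{τ=1}^t p_τ(i_τ; i₁,…,i_{τ−1})`. -/
def trajProb {n : ℕ} (p : (t : ℕ) → (Fin t → Fin n) → Fin n → ℝ) :
    (t : ℕ) → (Fin t → Fin n) → ℝ
  | 0, _ => 1
  | t + 1, s => trajProb p t (Fin.init s) * p t (Fin.init s) (s (Fin.last t))

open scoped RealInnerProductSpace

lemma aux_convex_grad {E : Type*} [NormedAddCommGroup E] [InnerProductSpace ℝ E] [CompleteSpace E]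
    (f : E → ℝ) (hc : ConvexOn ℝ Set.univ f) (hd : Differentiable ℝ f) (x y : E) :
    f x - f y ≤ ⟪gradient f x, x - y⟫ := by
  have h1 : ConvexOn ℝ Set.univ (fun t : ℝ => f (AffineMap.lineMap x y t)) := by
    have := hc.comp_affineMap (AffineMap.lineMap x y : ℝ →ᵃ[ℝ] E)
    simpa [Function.comp_def] using this
  have h2 : HasDerivAt (fun t : ℝ => f (AffineMap.lineMap x y t)) (fderiv ℝ f x (y - x)) 0 := by
    have hl : HasDerivAt (fun t : ℝ => (AffineMap.lineMap x y t : E)) (y - x) 0 :=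
      AffineMap.hasDerivAt_lineMap
    have hf : HasFDerivAt f (fderiv ℝ f x) (AffineMap.lineMap x y (0:ℝ)) := by
      simpa using (hd x).hasFDerivAt
    exact hf.comp_hasDerivAt (0:ℝ) hl
  have h3 := h1.le_slope_of_hasDerivAt (Set.mem_univ 0) (Set.mem_univ 1) one_pos h2
  rw [slope_def_field] at h3
  simp only [AffineMap.lineMap_apply_one, AffineMap.lineMap_apply_zero] at h3
  rw [inner_gradient_left, ← neg_sub y x, map_neg]
  linarith

lemma aux_proj {E : Type*} [NormedAddCommGroup E] [InnerProductSpace ℝ E]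
    (K : Set E) (hK : Convex ℝ K) (z y v : E) (hy : y ∈ K) (hv : v ∈ K)
    (h : ∀ u ∈ K, ‖y - z‖ ≤ ‖u - z‖) : ‖y - v‖ ^ 2 ≤ ‖z - v‖ ^ 2 := by
  have hne : Nonempty K := ⟨⟨y, hy⟩⟩
  have h1 : ‖z - y‖ = ⨅ w : K, ‖z - w‖ := by
    apply le_antisymm
    · apply le_ciInf
      intro w
      rw [norm_sub_rev z y, norm_sub_rev z w]
      exact h w w.2
    · exact ciInf_le ⟨0, by rintro _ ⟨w, rfl⟩; exact norm_nonneg _⟩ (⟨y, hy⟩ : K)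
  have h2 := (norm_eq_iInf_iff_real_inner_le_zero hK hy).1 h1 v hv
  have h3 : z - v = (z - y) - (v - y) := by abel
  rw [h3, norm_sub_rev y v, norm_sub_sq_real (z - y) (v - y)]
  nlinarith [sq_nonneg ‖z - y‖]

lemma aux_traj {n : ℕ} (p : (t : ℕ) → (Fin t → Fin n) → Fin n → ℝ) (k : ℕ)
    (F : (Fin (k + 1) → Fin n) → ℝ) :
    ∑ s : Fin (k + 1) → Fin n, trajProb p (k + 1) s * F s =
      ∑ s : Fin k → Fin n, trajProb p k s * ∑ i, p k s i * F (Fin.snoc s i) := by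
  rw [← (Fin.snocEquiv (fun _ : Fin (k + 1) => Fin n)).sum_comp, Fintype.sum_prod_type_right]
  refine Finset.sum_congr rfl fun s _ => ?_
  rw [Finset.mul_sum]
  refine Finset.sum_congr rfl fun i _ => ?_
  have : (Fin.snocEquiv (fun _ : Fin (k + 1) => Fin n)) (i, s)
      = (Fin.snoc s i : Fin (k + 1) → Fin n) := rfl
  rw [this, trajProb, Fin.init_snoc, Fin.snoc_last, mul_assoc]

lemma aux_traj_nonneg {n : ℕ} (p : (t : ℕ) → (Fin t → Fin n) → Fin n → ℝ)
    (hp : ∀ t s i, 0 ≤ p t s i) : ∀ k s, 0 ≤ trajProb p k s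
  | 0, _ => zero_le_one
  | k + 1, s => mul_nonneg (aux_traj_nonneg p hp k _) (hp _ _ _)

lemma aux_traj_sum {n : ℕ} (p : (t : ℕ) → (Fin t → Fin n) → Fin n → ℝ)
    (hp : ∀ t s, ∑ i, p t s i = 1) (k : ℕ) : ∑ s, trajProb p k s = 1 := by
  induction k with
  | zero => simp [trajProb]
  | succ k ih =>
    have := aux_traj p k (fun _ => 1)
    simpa [hp, ih] using this

lemma aux_norm {d : ℕ} (x : EuclideanSpace ℝ (Fin d)) (B : ℝ) (h : ∀ i, |x i| ≤ B) :
    ‖x‖ ^ 2 ≤ d * B ^ 2 := by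
  rw [EuclideanSpace.norm_sq_eq]
  calc ∑ i, ‖x i‖ ^ 2 ≤ ∑ _i : Fin d, B ^ 2 := by
        refine Finset.sum_le_sum fun i _ => ?_
        exact pow_le_pow_left₀ (norm_nonneg _) (h i) 2
    _ = d * B ^ 2 := by simp

lemma aux_sqrt (T : ℕ) (hT : 1 ≤ T) :
    ∑ k ∈ Finset.range T, 1 / (2 * Real.sqrt (k + 1)) ≤ Real.sqrt T - 1 / 2 := by
  induction T, hT using Nat.le_induction with
  | base => norm_num
  | succ m hm ih =>
    rw [Finset.sum_range_succ]
    push_cast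
    have hb : 0 < Real.sqrt ((m : ℝ) + 1) := Real.sqrt_pos.2 (by positivity)
    have h1 : Real.sqrt ((m : ℝ) + 1) ^ 2 = m + 1 := Real.sq_sqrt (by positivity)
    have h2 : Real.sqrt (m : ℝ) ^ 2 = m := Real.sq_sqrt (by positivity)
    have : 1 / (2 * Real.sqrt ((m : ℝ) + 1)) ≤ Real.sqrt ((m : ℝ) + 1) - Real.sqrt m := by
      rw [div_le_iff₀ (by positivity)]
      nlinarith [sq_nonneg (Real.sqrt ((m : ℝ) + 1) - Real.sqrt m)]
    linarith

lemma aux_abel (Δ : ℕ → ℝ) (B : ℝ) (hB : ∀ k, Δ k ≤ B) (T : ℕ) :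
    ∑ k ∈ Finset.range T, Real.sqrt (k + 1) / 2 * (Δ k - Δ (k + 1)) ≤
      B / 2 * Real.sqrt T - Real.sqrt T / 2 * Δ T := by
  induction T with
  | zero => simp
  | succ m ih =>
    rw [Finset.sum_range_succ]
    push_cast
    have : Real.sqrt (m : ℝ) ≤ Real.sqrt ((m : ℝ) + 1) := Real.sqrt_le_sqrt (by linarith)
    nlinarith [mul_nonneg (sub_nonneg.2 this) (sub_nonneg.2 (hB m))]

/-- One step of the method, conditionally on the history. -/
lemma aux_step {d n : ℕ} (hn : 0 < n)
    (Θ : Set (EuclideanSpace ℝ (Fin d))) (hΘconv : Convex ℝ Θ)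
    (r G : ℝ) (hr : 0 < r) (x v : EuclideanSpace ℝ (Fin d)) (hv : v ∈ Θ)
    (g y : Fin n → EuclideanSpace ℝ (Fin d)) (a b : Fin n → ℝ)
    (hab : ∀ i, a i - b i ≤ ⟪g i, x - v⟫)
    (hg : ∀ i, g i ≠ 0) (hG : ∀ i h, |g i h| ≤ G) (hy : ∀ i, y i ∈ Θ)
    (p w : Fin n → ℝ) (hp : ∀ i, p i = ‖g i‖ / ∑ j, ‖g j‖)
    (hw : ∀ i, w i = 1 / ((n : ℝ) * p i))
    (hproj : ∀ i, ∀ u ∈ Θ, ‖y i - (x - ((1 / r) * w i) • g i)‖ ≤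
      ‖u - (x - ((1 / r) * w i) • g i)‖) :
    (1 / (n : ℝ)) * ∑ i, a i - (1 / (n : ℝ)) * ∑ i, b i ≤
      r / 2 * (‖x - v‖ ^ 2 - ∑ i, p i * ‖y i - v‖ ^ 2) +
      1 / (2 * r) * (d * G ^ 2 - (1 / (n : ℝ)) * ∑ i, (‖g i‖ - (1 / (n : ℝ)) * ∑ j, ‖g j‖) ^ 2) := by
  have hn' : (0 : ℝ) < n := by exact_mod_cast hn
  have hN : ∀ i, 0 < ‖g i‖ := fun i => norm_pos_iff.2 (hg i)
  have hS : 0 < ∑ j, ‖g j‖ :=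
    Finset.sum_pos (fun i _ => hN i) ⟨⟨0, hn⟩, Finset.mem_univ _⟩
  have hG2 : ∑ i, ‖g i‖ ^ 2 ≤ n * (d * G ^ 2) := by
    calc ∑ i, ‖g i‖ ^ 2 ≤ ∑ _i : Fin n, (d * G ^ 2 : ℝ) :=
          Finset.sum_le_sum fun i _ => aux_norm _ _ (hG i)
      _ = _ := by simp
  have hvar : (1 / (n : ℝ)) * ∑ i, (‖g i‖ - (1 / (n : ℝ)) * ∑ j, ‖g j‖) ^ 2 =
      (1 / (n : ℝ)) * ∑ i, ‖g i‖ ^ 2 - ((∑ j, ‖g j‖) / n) ^ 2 := by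
    have : ∀ m : ℝ, ∑ i, (‖g i‖ - m) ^ 2 = ∑ i, ‖g i‖ ^ 2 - 2 * m * ∑ i, ‖g i‖ + n * m ^ 2 := by
      intro m
      simp only [sub_sq, Finset.sum_add_distrib, Finset.sum_sub_distrib, Finset.mul_sum]
      simp only [Finset.sum_const, Finset.card_univ, Fintype.card_fin, nsmul_eq_mul]
      congr 2
      exact Finset.sum_congr rfl fun i _ => by ring
    rw [this]
    field_simp
    ring
  have hab' : ∑ i, a i - ∑ i, b i ≤ ∑ i, ⟪g i, x - v⟫ := by
    rw [← Finset.sum_sub_distrib]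
    exact Finset.sum_le_sum fun i _ => hab i
  have hpsum : ∑ i, p i = 1 := by
    simp only [hp, ← Finset.sum_div]
    exact div_self hS.ne'
  have hstep : ∀ i, p i * ‖y i - v‖ ^ 2 ≤ p i * ‖x - v‖ ^ 2 - 2 / (r * n) * ⟪g i, x - v⟫ +
      (∑ j, ‖g j‖) / (r ^ 2 * n ^ 2) * ‖g i‖ := by
    intro i
    have h1 := aux_proj Θ hΘconv _ (y i) v (hy i) hv (hproj i)
    have hpi : 0 < p i := by rw [hp]; exact div_pos (hN i) hS
    have h2 : x - ((1 / r) * w i) • g i - v = (x - v) - ((1 / r) * w i) • g i := by abel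
    rw [h2, norm_sub_sq_real (x - v), inner_smul_right, norm_smul, mul_pow, Real.norm_eq_abs, sq_abs,
      real_inner_comm] at h1
    have h3 := mul_le_mul_of_nonneg_left h1 hpi.le
    refine h3.trans (le_of_eq ?_)
    rw [hw, hp]
    have := (hN i).ne'
    have := hS.ne'
    generalize ⟪g i, x - v⟫ = c
    field_simp
  have hsum := Finset.sum_le_sum fun i (_ : i ∈ Finset.univ) => hstep i
  rw [Finset.sum_add_distrib, Finset.sum_sub_distrib, ← Finset.sum_mul, ← Finset.mul_sum,
    ← Finset.mul_sum, hpsum, one_mul] at hsum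
  rw [hvar]
  generalize ∑ i, p i * ‖y i - v‖ ^ 2 = Y at *
  generalize ∑ i, ⟪g i, x - v⟫ = I at *
  generalize ∑ i, ‖g i‖ ^ 2 = Q at *
  generalize ∑ i, ‖g i‖ = S at *
  generalize ‖x - v‖ ^ 2 = X at *
  have e1 : (1 / (n : ℝ)) * ∑ i, a i - (1 / (n : ℝ)) * ∑ i, b i ≤ 1 / n * I := by
    rw [← mul_sub]
    exact mul_le_mul_of_nonneg_left hab' (by positivity)
  have e2 : 1 / (n : ℝ) * Q ≤ d * G ^ 2 := by
    rw [one_div, inv_mul_le_iff₀ hn']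
    exact hG2
  have e3 : 1 / n * I ≤ r / 2 * (X - Y) + 1 / (2 * r) * (S / n) ^ 2 := by
    have := mul_le_mul_of_nonneg_left hsum (by positivity : 0 ≤ r / 2)
    have e : r / 2 * (X - 2 / (r * n) * I + S / (r ^ 2 * n ^ 2) * S) =
      r / 2 * X - 1 / n * I + 1 / (2 * r) * (S / n) ^ 2 := by
      field_simp
    rw [e] at this
    linarith
  have e4 := mul_le_mul_of_nonneg_left e2 (by positivity : 0 ≤ 1 / (2 * r))
  linarith

/-- Corollary 2.1 of the paper: expected regret of adaptive-probabilities SGD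
with step sizes `α_t = 1/√t` and optimal probabilities `p̂_t(i) ∝ ‖∇f_i(θ_t)‖₂`:
`Σ_t E[f(θ_t) − f(θ*)] ≤ d G²(√T − 1/2) − Σ_t (1/(2√t)) E[Var_n(‖∇f_i(θ_t)‖₂)] + (d D²/2)√T`.
Here `θpath t s` is the iterate `θ_{t+1}` produced by the history `s = (i₁,…,i_t)`. -/
theorem stmt_11 (d n : ℕ) (hn : 0 < n) (T : ℕ) (hT : 1 ≤ T)
    (Θ : Set (EuclideanSpace ℝ (Fin d))) (hΘconv : Convex ℝ Θ)
    (f : Fin n → EuclideanSpace ℝ (Fin d) → ℝ)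
    (hconv : ∀ i, ConvexOn ℝ Set.univ (f i))
    (hdiff : ∀ i, Differentiable ℝ (f i))
    (D G : ℝ)
    (hD : ∀ θ ∈ Θ, ∀ θ' ∈ Θ, ∀ h : Fin d, |θ h - θ' h| ≤ D)
    (hgradne : ∀ (i : Fin n), ∀ θ ∈ Θ, gradient (f i) θ ≠ 0)
    (hG : ∀ (i : Fin n), ∀ θ ∈ Θ, ∀ h : Fin d, |gradient (f i) θ h| ≤ G)
    (θ₁ : EuclideanSpace ℝ (Fin d)) (hθ₁ : θ₁ ∈ Θ)
    (θpath : (t : ℕ) → (Fin t → Fin n) → EuclideanSpace ℝ (Fin d))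
    (hinit : ∀ s : Fin 0 → Fin n, θpath 0 s = θ₁)
    (hmem : ∀ t s, θpath t s ∈ Θ)
    -- optimal sampling probabilities, proportional to the gradient norms at the current iterate
    (phat : (t : ℕ) → (Fin t → Fin n) → Fin n → ℝ)
    (hphat : ∀ t s i, phat t s i =
      ‖gradient (f i) (θpath t s)‖ / ∑ j, ‖gradient (f j) (θpath t s)‖)
    (what : (t : ℕ) → (Fin t → Fin n) → Fin n → ℝ)
    (hwhat : ∀ t s i, what t s i = 1 / ((n : ℝ) * phat t s i))
    (hproj : ∀ (t : ℕ) (s : Fin t → Fin n) (i : Fin n), ∀ u ∈ Θ,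
      ‖θpath (t + 1) (Fin.snoc s i) -
          (θpath t s - ((1 / Real.sqrt (t + 1)) * what t s i) • gradient (f i) (θpath t s))‖ ≤
        ‖u - (θpath t s - ((1 / Real.sqrt (t + 1)) * what t s i) • gradient (f i) (θpath t s))‖)
    (θstar : EuclideanSpace ℝ (Fin d)) (hθstar : θstar ∈ Θ) :
    -- regret: t ranges over 1..T, encoded as t = k+1 with k ∈ range T, and θ_t = θpath k
    ∑ k ∈ Finset.range T, ∑ s : Fin k → Fin n, trajProb phat k s *
        ((1 / (n : ℝ)) * ∑ i, f i (θpath k s) - (1 / (n : ℝ)) * ∑ i, f i θstar) ≤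
      (d : ℝ) * G ^ 2 * (Real.sqrt T - 1 / 2) -
      (∑ k ∈ Finset.range T, (1 / (2 * Real.sqrt (k + 1))) *
        ∑ s : Fin k → Fin n, trajProb phat k s *
          ((1 / (n : ℝ)) * ∑ i,
            (‖gradient (f i) (θpath k s)‖ -
              (1 / (n : ℝ)) * ∑ j, ‖gradient (f j) (θpath k s)‖) ^ 2)) +
      ((d : ℝ) * D ^ 2 / 2) * Real.sqrt T := by
  have hn' : (0 : ℝ) < n := by exact_mod_cast hn
  have hN : ∀ t s i, 0 < ‖gradient (f i) (θpath t s)‖ :=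
    fun t s i => norm_pos_iff.2 (hgradne i _ (hmem t s))
  have hS : ∀ t s, 0 < ∑ j, ‖gradient (f j) (θpath t s)‖ := fun t s =>
    Finset.sum_pos (fun i _ => hN t s i) ⟨⟨0, hn⟩, Finset.mem_univ _⟩
  have hp0 : ∀ t s i, 0 ≤ phat t s i := by
    intro t s i
    rw [hphat]
    exact div_nonneg (hN t s i).le (hS t s).le
  have hp1 : ∀ t s, ∑ i, phat t s i = 1 := by
    intro t s
    simp only [hphat, ← Finset.sum_div]
    exact div_self (hS t s).ne'
  have hP0 := aux_traj_nonneg phat hp0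
  have hP1 := aux_traj_sum phat hp1
  let Δ : ℕ → ℝ := fun k => ∑ s, trajProb phat k s * ‖θpath k s - θstar‖ ^ 2
  let V : ℕ → ℝ := fun k => ∑ s : Fin k → Fin n, trajProb phat k s *
          ((1 / (n : ℝ)) * ∑ i,
            (‖gradient (f i) (θpath k s)‖ -
              (1 / (n : ℝ)) * ∑ j, ‖gradient (f j) (θpath k s)‖) ^ 2)
  have hΔ0 : ∀ k, 0 ≤ Δ k := fun k =>
    Finset.sum_nonneg fun s _ => mul_nonneg (hP0 k s) (sq_nonneg _)
  have hΔB : ∀ k, Δ k ≤ d * D ^ 2 := by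
    intro k
    calc Δ k ≤ ∑ s, trajProb phat k s * (d * D ^ 2) := by
          refine Finset.sum_le_sum fun s _ => mul_le_mul_of_nonneg_left ?_ (hP0 k s)
          exact aux_norm _ _ fun h => hD _ (hmem k s) _ hθstar h
      _ = d * D ^ 2 := by rw [← Finset.sum_mul, hP1, one_mul]
  have hk : ∀ k ∈ Finset.range T, ∑ s : Fin k → Fin n, trajProb phat k s *
        ((1 / (n : ℝ)) * ∑ i, f i (θpath k s) - (1 / (n : ℝ)) * ∑ i, f i θstar) ≤
      Real.sqrt (k + 1) / 2 * (Δ k - Δ (k + 1)) +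
      (1 / (2 * Real.sqrt (k + 1)) * (d * G ^ 2) - 1 / (2 * Real.sqrt (k + 1)) * V k) := by
    intro k _
    have hr : 0 < Real.sqrt ((k : ℝ) + 1) := Real.sqrt_pos.2 (by positivity)
    have h1 := Finset.sum_le_sum fun s (_ : s ∈ (Finset.univ : Finset (Fin k → Fin n))) =>
      mul_le_mul_of_nonneg_left
        (aux_step hn Θ hΘconv (Real.sqrt ((k : ℝ) + 1)) G hr (θpath k s) θstar hθstar
          (fun i => gradient (f i) (θpath k s)) (fun i => θpath (k + 1) (Fin.snoc s i))
          (fun i => f i (θpath k s)) (fun i => f i θstar)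
          (fun i => aux_convex_grad _ (hconv i) (hdiff i) _ _)
          (fun i => hgradne i _ (hmem k s)) (fun i h => hG i _ (hmem k s) h)
          (fun i => hmem _ _) (phat k s) (what k s) (hphat k s) (hwhat k s)
          (fun i => hproj k s i)) (hP0 k s)
    refine h1.trans (le_of_eq ?_)
    have h2 : Δ (k + 1) = ∑ s : Fin k → Fin n, trajProb phat k s *
        ∑ i, phat k s i * ‖θpath (k + 1) (Fin.snoc s i) - θstar‖ ^ 2 :=
      aux_traj phat k (fun s => ‖θpath (k + 1) s - θstar‖ ^ 2)
    have h3 : (d * G ^ 2 : ℝ) - V k = ∑ s : Fin k → Fin n, trajProb phat k s *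
        (d * G ^ 2 - (1 / (n : ℝ)) * ∑ i, (‖gradient (f i) (θpath k s)‖ -
              (1 / (n : ℝ)) * ∑ j, ‖gradient (f j) (θpath k s)‖) ^ 2) := by
      simp only [mul_sub (trajProb phat k _), Finset.sum_sub_distrib]
      rw [← Finset.sum_mul, hP1, one_mul]
    rw [← mul_sub, h2, h3]
    simp only [Δ]
    rw [← Finset.sum_sub_distrib, Finset.mul_sum, Finset.mul_sum, ← Finset.sum_add_distrib]
    refine Finset.sum_congr rfl fun s _ => ?_
    rw [mul_add, ← mul_sub, mul_left_comm, mul_left_comm (trajProb phat k s)]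
  have hsum := Finset.sum_le_sum hk
  rw [Finset.sum_add_distrib, Finset.sum_sub_distrib, ← Finset.sum_mul] at hsum
  have hA := aux_abel Δ _ hΔB T
  have hB := mul_le_mul_of_nonneg_right (aux_sqrt T hT) (by positivity : 0 ≤ (d : ℝ) * G ^ 2)
  have hC : 0 ≤ Real.sqrt T / 2 * Δ T := mul_nonneg (by positivity) (hΔ0 T)
  refine hsum.trans ?_
  change _ ≤ (d : ℝ) * G ^ 2 * (Real.sqrt T - 1 / 2) -
    (∑ k ∈ Finset.range T, (1 / (2 * Real.sqrt (k + 1))) * V k) + _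
  linarith
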